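/- arXiv:2511.00723 — 8 statements merged into one kernel-verified Lean document; each statement's English description precedes it below -/
import Mathlib

section
/- Let Q, T : [0,1] → ℝ satisfy incentive compatibility: for all θ, θ' ∈ [0,1], θ·Q(θ) − T(θ) ≥ θ·Q(θ') − T(θ'). Then Q is monotone nondecreasing on [0,1], and defining U(θ) := θ·Q(θ) − T(θ), for every θ ∈ [0,1] one has U(θ) = U(0) + ∫_0^θ Q(x) dx, or equivalently T(θ) = T(0) + θ·Q(θ) − ∫_0^θ Q(x) dx. -/
/-!
Writing `U θ = θ * Q θ - T θ`, incentive compatibility applied in both directions gives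
`(b - a) * Q a ≤ U b - U a ≤ (b - a) * Q b` for `a ≤ b`, so `Q` is monotone. The integral of a
monotone `Q` over `[a, b]` satisfies the same two bounds, so the defect
`U b - U a - ∫ x in a..b, Q x` is at most `(b - a) * (Q b - Q a)` in absolute value. The defect is
additive over adjacent intervals, and each bisection of `[a, b]` halves the total bound;
hence the defect vanishes. No differentiability or continuity of `U` is needed.
-/

/-- An increment sandwiched between the left and right rectangles of a monotone function equals
its integral. -/
lemma sub_eq_integral_of_sandwich {Q U : ℝ → ℝ} (hQ : MonotoneOn Q (Set.Icc 0 1))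
    (hlo : ∀ a ∈ Set.Icc (0:ℝ) 1, ∀ b ∈ Set.Icc (0:ℝ) 1, a ≤ b → (b - a) * Q a ≤ U b - U a)
    (hhi : ∀ a ∈ Set.Icc (0:ℝ) 1, ∀ b ∈ Set.Icc (0:ℝ) 1, a ≤ b → U b - U a ≤ (b - a) * Q b)
    {a b : ℝ} (ha : a ∈ Set.Icc (0:ℝ) 1) (hb : b ∈ Set.Icc (0:ℝ) 1) (hab : a ≤ b) :
    U b - U a = ∫ x in a..b, Q x := by
  have hint : ∀ a ∈ Set.Icc (0:ℝ) 1, ∀ b ∈ Set.Icc (0:ℝ) 1,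
      IntervalIntegrable Q MeasureTheory.volume a b := fun a ha b hb =>
    (hQ.mono (Set.uIcc_subset_Icc ha hb)).intervalIntegrable
  have key : ∀ n : ℕ, ∀ a ∈ Set.Icc (0:ℝ) 1, ∀ b ∈ Set.Icc (0:ℝ) 1, a ≤ b →
      |U b - U a - ∫ x in a..b, Q x| ≤ (b - a) * (Q b - Q a) * (1 / 2) ^ n := by
    intro n
    induction n with
    | zero =>
      intro a ha b hb hab
      have hmem : ∀ x ∈ Set.Icc a b, x ∈ Set.Icc (0:ℝ) 1 := fun x hx =>
        ⟨ha.1.trans hx.1, hx.2.trans hb.2⟩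
      have h1 : (b - a) * Q a ≤ ∫ x in a..b, Q x := by
        have := intervalIntegral.integral_mono_on hab
          (intervalIntegrable_const (c := Q a)) (hint a ha b hb)
          (fun x hx => hQ ha (hmem x hx) hx.1)
        simpa using this
      have h2 : ∫ x in a..b, Q x ≤ (b - a) * Q b := by
        have := intervalIntegral.integral_mono_on hab
          (hint a ha b hb) (intervalIntegrable_const (c := Q b))
          (fun x hx => hQ (hmem x hx) hb hx.2)
        simpa using this
      have h3 := hlo a ha b hb hab
      have h4 := hhi a ha b hb hab
      rw [abs_le]
      constructor <;> linarith
    | succ n ih =>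
      intro a ha b hb hab
      obtain ⟨m, hm⟩ : ∃ m, m = (a + b) / 2 := ⟨_, rfl⟩
      have ham : a ≤ m := by linarith
      have hmb : m ≤ b := by linarith
      have hmm : m ∈ Set.Icc (0:ℝ) 1 := ⟨ha.1.trans ham, hmb.trans hb.2⟩
      have hadd := intervalIntegral.integral_add_adjacent_intervals
        (hint a ha m hmm) (hint m hmm b hb)
      calc |U b - U a - ∫ x in a..b, Q x|
          = |(U m - U a - ∫ x in a..m, Q x) + (U b - U m - ∫ x in m..b, Q x)| := by
            rw [← hadd]; congr 1; ring
        _ ≤ (m - a) * (Q m - Q a) * (1 / 2) ^ n + (b - m) * (Q b - Q m) * (1 / 2) ^ n :=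
            (abs_add_le _ _).trans (add_le_add (ih a ha m hmm ham) (ih m hmm b hb hmb))
        _ = (b - a) * (Q b - Q a) * (1 / 2) ^ (n + 1) := by
            have e1 : m - a = (b - a) / 2 := by linarith
            have e2 : b - m = (b - a) / 2 := by linarith
            rw [e1, e2]; ring
  have hlim : Filter.Tendsto (fun n : ℕ => (b - a) * (Q b - Q a) * (1 / 2 : ℝ) ^ n)
      Filter.atTop (nhds 0) := by
    simpa using (tendsto_pow_atTop_nhds_zero_of_lt_one (r := (1 / 2 : ℝ))
      (by norm_num) (by norm_num)).const_mul ((b - a) * (Q b - Q a))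
  have h0 := ge_of_tendsto' hlim (fun n => key n a ha b hb hab)
  exact sub_eq_zero.mp (abs_nonpos_iff.mp h0)

/-- Payoff-equivalence lemma (Myerson) for a single buyer: if `(Q, T)` is
incentive compatible on `[0,1]`, then `Q` is nondecreasing on `[0,1]` and the
buyer's utility `U θ = θ·Q θ − T θ` satisfies the envelope formula
`U θ = U 0 + ∫_0^θ Q`. -/
theorem stmt_0 (Q T : ℝ → ℝ)
    (hIC : ∀ θ ∈ Set.Icc (0:ℝ) 1, ∀ θ' ∈ Set.Icc (0:ℝ) 1,
      θ * Q θ - T θ ≥ θ * Q θ' - T θ') :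
    MonotoneOn Q (Set.Icc 0 1) ∧
    ∀ θ ∈ Set.Icc (0:ℝ) 1,
      θ * Q θ - T θ = (0 * Q 0 - T 0) + ∫ x in (0:ℝ)..θ, Q x := by
  have hmono : MonotoneOn Q (Set.Icc 0 1) := by
    intro a ha b hb hab
    rcases hab.eq_or_lt with rfl | hlt
    · exact le_rfl
    · have h1 := hIC a ha b hb
      have h2 := hIC b hb a ha
      have h3 : 0 ≤ (b - a) * (Q b - Q a) := by linarith
      linarith [nonneg_of_mul_nonneg_right h3 (sub_pos.mpr hlt)]
  refine ⟨hmono, fun θ hθ => ?_⟩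
  have h := sub_eq_integral_of_sandwich (U := fun θ => θ * Q θ - T θ) hmono
    (fun a ha b hb _ => by linarith [hIC b hb a ha])
    (fun a ha b hb _ => by linarith [hIC a ha b hb])
    (Set.left_mem_Icc.mpr zero_le_one) hθ hθ.1
  linarith
end

section
/- Let f : [0,1] → ℝ be a nonnegative integrable density with cumulative distribution function F(θ) = ∫_0^θ f(x) dx satisfying F(1) = 1. Let Q : [0,1] → ℝ be monotone nondecreasing with 0 ≤ Q ≤ 1, let T₀ ∈ ℝ, and define T(θ) = T₀ + θ·Q(θ) − ∫_0^θ Q(x) dx. Then ∫_0^1 T(θ)·f(θ) dθ = T₀ + ∫_0^1 Q(θ)·(θ·f(θ) − (1 − F(θ))) dθ. -/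
/-!
Write `G θ = ∫ x in 0..θ, Q x`. Expanding both integrands, the terms `T₀ * f θ` and `θ * Q θ * f θ`
match because `F 1 = 1`, and what remains is `∫ G * f = ∫ Q - ∫ Q * F`. This is integration by parts
for the absolutely continuous functions `G` and `F`, whose derivatives are a.e. `Q` and `f`.
-/

/-- Integration by parts for two primitives of merely integrable functions. -/
lemma integral_primitive_mul_add (f g : ℝ → ℝ) (a b : ℝ)
    (hf : IntervalIntegrable f MeasureTheory.volume a b)
    (hg : IntervalIntegrable g MeasureTheory.volume a b) :
    ∫ t in a..b, (g t * (∫ x in a..t, f x) + (∫ x in a..t, g x) * f t) =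
      (∫ x in a..b, g x) * ∫ x in a..b, f x := by
  have hF := hf.absolutelyContinuousOnInterval_intervalIntegral (c := a) (by simp)
  have hG := hg.absolutelyContinuousOnInterval_intervalIntegral (c := a) (by simp)
  have h := hG.integral_deriv_mul_eq_sub hF
  simp only [intervalIntegral.integral_same, mul_zero, sub_zero] at h
  rw [← h]
  apply intervalIntegral.integral_congr_ae
  -- Lebesgue differentiation: almost everywhere the primitives have derivatives `f` and `g`.
  filter_upwards [hf.ae_hasDerivAt_integral, hg.ae_hasDerivAt_integral] with x h₁ h₂ hx
  have hx' := Set.uIoc_subset_uIcc hx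
  rw [(h₁ hx' a (by simp)).deriv, (h₂ hx' a (by simp)).deriv]

/-- Myerson's virtual-valuation revenue identity: the expected payment of a
buyer whose interim payment is pinned down by the envelope formula equals
`T₀` plus the expectation of `Q(θ)·(θ·f(θ) − (1 − F(θ)))`. -/
theorem stmt_1 (f : ℝ → ℝ)
    (hf_nonneg : ∀ x ∈ Set.Icc (0:ℝ) 1, 0 ≤ f x)
    (hf_int : IntervalIntegrable f MeasureTheory.volume 0 1)
    (F : ℝ → ℝ) (hF : ∀ θ, F θ = ∫ x in (0:ℝ)..θ, f x) (hF1 : F 1 = 1)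
    (Q : ℝ → ℝ) (hQ_mono : MonotoneOn Q (Set.Icc 0 1))
    (hQ_bd : ∀ θ ∈ Set.Icc (0:ℝ) 1, 0 ≤ Q θ ∧ Q θ ≤ 1)
    (T₀ : ℝ) (T : ℝ → ℝ)
    (hT : ∀ θ, T θ = T₀ + θ * Q θ - ∫ x in (0:ℝ)..θ, Q x) :
    ∫ θ in (0:ℝ)..1, T θ * f θ =
      T₀ + ∫ θ in (0:ℝ)..1, Q θ * (θ * f θ - (1 - F θ)) := by
  have hQ : IntervalIntegrable Q MeasureTheory.volume 0 1 :=
    MonotoneOn.intervalIntegrable (by rwa [Set.uIcc_of_le zero_le_one])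
  have hFc : ContinuousOn (fun t => ∫ x in (0:ℝ)..t, f x) (Set.uIcc 0 1) :=
    (hf_int.absolutelyContinuousOnInterval_intervalIntegral (c := 0) (by simp)).continuousOn
  have hGc : ContinuousOn (fun t => ∫ x in (0:ℝ)..t, Q x) (Set.uIcc 0 1) :=
    (hQ.absolutelyContinuousOnInterval_intervalIntegral (c := 0) (by simp)).continuousOn
  -- A product of integrable functions need not be integrable; here `Q` is bounded.
  have hQf : IntervalIntegrable (fun t => Q t * f t) MeasureTheory.volume 0 1 := by
    rw [intervalIntegrable_iff_integrableOn_Ioc_of_le zero_le_one] at hQ hf_int ⊢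
    refine MeasureTheory.Integrable.bdd_mul (c := 1) hf_int hQ.aestronglyMeasurable ?_
    filter_upwards [MeasureTheory.ae_restrict_mem measurableSet_Ioc] with x hx
    have := hQ_bd x (Set.Ioc_subset_Icc_self hx)
    rw [Real.norm_eq_abs, abs_le]
    constructor <;> linarith
  have htQf : IntervalIntegrable (fun t => t * (Q t * f t)) MeasureTheory.volume 0 1 :=
    hQf.continuousOn_mul continuousOn_id
  have hQF : IntervalIntegrable (fun t => Q t * ∫ x in (0:ℝ)..t, f x) MeasureTheory.volume 0 1 :=
    hQ.mul_continuousOn hFc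
  have hGf : IntervalIntegrable (fun t => (∫ x in (0:ℝ)..t, Q x) * f t)
      MeasureTheory.volume 0 1 :=
    hf_int.continuousOn_mul hGc
  have hf1 : ∫ x in (0:ℝ)..1, f x = 1 := by rw [← hF, hF1]
  have key := integral_primitive_mul_add f Q 0 1 hf_int hQ
  rw [intervalIntegral.integral_add hQF hGf, hf1] at key
  have hL : ∫ θ in (0:ℝ)..1, T θ * f θ =
      T₀ + (∫ t in (0:ℝ)..1, t * (Q t * f t))
        - ∫ t in (0:ℝ)..1, (∫ x in (0:ℝ)..t, Q x) * f t := by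
    have e : ∀ θ, T θ * f θ =
        T₀ * f θ + θ * (Q θ * f θ) - (∫ x in (0:ℝ)..θ, Q x) * f θ := by
      intro θ
      rw [hT]
      ring
    simp_rw [e]
    rw [intervalIntegral.integral_sub ((hf_int.const_mul T₀).add htQf) hGf,
      intervalIntegral.integral_add (hf_int.const_mul T₀) htQf,
      intervalIntegral.integral_const_mul, hf1, mul_one]
  have hR : ∫ θ in (0:ℝ)..1, Q θ * (θ * f θ - (1 - F θ)) =
      (∫ t in (0:ℝ)..1, t * (Q t * f t)) - (∫ t in (0:ℝ)..1, Q t)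
        + ∫ t in (0:ℝ)..1, Q t * ∫ x in (0:ℝ)..t, f x := by
    have e : ∀ θ, Q θ * (θ * f θ - (1 - F θ)) =
        θ * (Q θ * f θ) - Q θ + Q θ * ∫ x in (0:ℝ)..θ, f x := by
      intro θ
      rw [hF]
      ring
    simp_rw [e]
    rw [intervalIntegral.integral_add (htQf.sub hQ) hQF, intervalIntegral.integral_sub htQf hQ]
  rw [hL, hR]
  linarith
end

section
/- Let F : ℝ → ℝ be strictly increasing on [0,1] with F(0) = 0. Fix a reserve price ρ and for each integer k ≥ 1 define the first-price equilibrium bidding function with k bidders by β^k(θ) = θ − (∫_ρ^θ F(x)^{k−1} dx) / F(θ)^{k−1} (with F^0 ≡ 1). Then for all 0 ≤ ρ < θ ≤ 1 and every integer n ≥ 2, β^{n−1}(θ) < β^n(θ): the equilibrium bid of every type strictly above the reserve strictly increases with the number of bidders. -/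
/-!
Write `n = m + 2`. After multiplying by `F(θ)^{m+1} > 0`, the claim becomes
`0 < ∫_ρ^θ F(x)^m (F(θ) - F(x)) dx`, and the integrand is positive on `(ρ, θ)` because
`0 < F(x) < F(θ)` there. The integrals are genuine since powers of the nonnegative monotone
function `F` are monotone on `[ρ, θ]`, hence integrable; no continuity of `F` is needed.
-/

/-- In the first-price auction with reserve price `ρ`, the equilibrium bid
`β^k(θ) = θ − (∫_ρ^θ F^{k−1})/F(θ)^{k−1}` of every type strictly above the
reserve strictly increases with the number of bidders. -/
theorem stmt_2 (F : ℝ → ℝ) (hF : StrictMonoOn F (Set.Icc 0 1)) (hF0 : F 0 = 0)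
    (ρ : ℝ) (β : ℕ → ℝ → ℝ)
    (hβ : ∀ k : ℕ, 1 ≤ k → ∀ θ : ℝ,
      β k θ = θ - (∫ x in ρ..θ, (F x) ^ (k - 1)) / (F θ) ^ (k - 1)) :
    ∀ θ : ℝ, 0 ≤ ρ → ρ < θ → θ ≤ 1 →
      ∀ n : ℕ, 2 ≤ n → β (n - 1) θ < β n θ := by
  intro θ hρ hρθ hθ n hn
  obtain ⟨m, rfl⟩ := Nat.exists_eq_add_of_le' hn
  have hsub : Set.Icc ρ θ ⊆ Set.Icc 0 1 := Set.Icc_subset_Icc hρ hθ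
  have hnonneg : ∀ x ∈ Set.Icc ρ θ, 0 ≤ F x := fun x hx =>
    hF0 ▸ hF.monotoneOn (by simp) (hsub hx) (hsub hx).1
  have hpos : ∀ x, ρ < x → x ≤ θ → 0 < F x := fun x h1 h2 =>
    hF0 ▸ hF (by simp) (hsub ⟨h1.le, h2⟩) (hρ.trans_lt h1)
  have hint : ∀ k : ℕ, IntervalIntegrable (fun x => F x ^ k) MeasureTheory.volume ρ θ := by
    intro k
    apply MonotoneOn.intervalIntegrable
    rw [Set.uIcc_of_le hρθ.le]
    intro x hx y hy hxy
    exact pow_le_pow_left₀ (hnonneg x hx) (hF.monotoneOn (hsub hx) (hsub hy) hxy) k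
  have hθpos : 0 < F θ := hpos θ hρθ le_rfl
  have key : 0 < ∫ x in ρ..θ, (F x ^ m * F θ - F x ^ (m + 1)) := by
    refine intervalIntegral.intervalIntegral_pos_of_pos_on
      (((hint m).mul_const (F θ)).sub (hint (m + 1))) (fun x hx => ?_) hρθ
    have hx0 := pow_pos (hpos x hx.1 hx.2.le) m
    have hlt : F x < F θ :=
      hF (hsub ⟨hx.1.le, hx.2.le⟩) (hsub ⟨hρθ.le, le_rfl⟩) hx.2
    rw [pow_succ]
    exact sub_pos.2 (mul_lt_mul_of_pos_left hlt hx0)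
  rw [intervalIntegral.integral_sub ((hint m).mul_const (F θ)) (hint (m + 1)),
    intervalIntegral.integral_mul_const, sub_pos] at key
  rw [hβ _ (by omega), hβ _ (by omega), show m + 2 - 1 - 1 = m by omega,
    show m + 2 - 1 = m + 1 by omega]
  apply sub_lt_sub_left
  rw [div_lt_div_iff₀ (pow_pos hθpos _) (pow_pos hθpos _), pow_succ (F θ) m]
  nlinarith [mul_lt_mul_of_pos_right key (pow_pos hθpos m)]
end

section
/- Let 0 ≤ ρ < 1 and let G : ℝ → ℝ be monotone nondecreasing on [ρ,1] with G(x) > 0 for every x ∈ [ρ,1]. Define β(θ) = θ − (∫_ρ^θ G(x) dx) / G(θ) for θ ∈ [ρ,1]. Then: (i) ρ ≤ β(θ) ≤ θ for every θ ∈ [ρ,1]; (ii) β is monotone nondecreasing on [ρ,1]; (iii) if moreover G is strictly increasing on [ρ,1], then β is strictly increasing on [ρ,1]. -/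
/-!
Write `I θ = ∫_ρ^θ G`. For `a ≤ b` in `[ρ,1]`, monotonicity of `G` gives
`∫_a^b G ≤ (b - a) * G b`, so that
`β b - β a ≥ I a * (1 / G a - 1 / G b) ≥ 0`.
If `G` is strictly increasing, the last inequality is strict as soon as `I a > 0`, that is, for
`a > ρ`; for `a = ρ` the integral vanishes, and one compares `β b` with the value of `β` at the
midpoint of `ρ` and `b` instead.
-/

lemma MonotoneOn.intervalIntegrable_of_mem_Icc {ρ a b : ℝ} {G : ℝ → ℝ}
    (hG : MonotoneOn G (Set.Icc ρ 1)) (ha : a ∈ Set.Icc ρ 1) (hb : b ∈ Set.Icc ρ 1) :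
    IntervalIntegrable G MeasureTheory.volume a b :=
  (hG.mono (Set.uIcc_subset_Icc ha hb)).intervalIntegrable

lemma MonotoneOn.mul_le_integral {ρ a b : ℝ} {G : ℝ → ℝ}
    (hG : MonotoneOn G (Set.Icc ρ 1)) (ha : a ∈ Set.Icc ρ 1) (hb : b ∈ Set.Icc ρ 1)
    (hab : a ≤ b) : (b - a) * G a ≤ ∫ x in a..b, G x := by
  have h := intervalIntegral.integral_mono_on hab (intervalIntegrable_const (c := G a))
    (hG.intervalIntegrable_of_mem_Icc ha hb)
    (fun x hx => hG ha ⟨ha.1.trans hx.1, hx.2.trans hb.2⟩ hx.1)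
  simpa using h

lemma MonotoneOn.integral_le_mul {ρ a b : ℝ} {G : ℝ → ℝ}
    (hG : MonotoneOn G (Set.Icc ρ 1)) (ha : a ∈ Set.Icc ρ 1) (hb : b ∈ Set.Icc ρ 1)
    (hab : a ≤ b) : ∫ x in a..b, G x ≤ (b - a) * G b := by
  have h := intervalIntegral.integral_mono_on hab (hG.intervalIntegrable_of_mem_Icc ha hb)
    (intervalIntegrable_const (c := G b))
    (fun x hx => hG ⟨ha.1.trans hx.1, hx.2.trans hb.2⟩ hb hx.2)
  simpa using h


/-- Properties of the dark first-price equilibrium bidding function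
`β(θ) = θ − (∫_ρ^θ G)/G(θ)` for a positive nondecreasing `G` on `[ρ,1]`:
it lies between the reserve `ρ` and the type `θ`, it is nondecreasing, and it
is strictly increasing whenever `G` is. -/
theorem stmt_3 (ρ : ℝ) (hρ : 0 ≤ ρ) (hρ1 : ρ < 1)
    (G : ℝ → ℝ) (hG_mono : MonotoneOn G (Set.Icc ρ 1))
    (hG_pos : ∀ x ∈ Set.Icc ρ 1, 0 < G x)
    (β : ℝ → ℝ)
    (hβ : ∀ θ ∈ Set.Icc ρ 1, β θ = θ - (∫ x in ρ..θ, G x) / G θ) :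
    (∀ θ ∈ Set.Icc ρ 1, ρ ≤ β θ ∧ β θ ≤ θ) ∧
    MonotoneOn β (Set.Icc ρ 1) ∧
    (StrictMonoOn G (Set.Icc ρ 1) → StrictMonoOn β (Set.Icc ρ 1)) := by
  have hρmem : ρ ∈ Set.Icc ρ 1 := ⟨le_rfl, hρ1.le⟩
  have hI_nonneg : ∀ a ∈ Set.Icc ρ 1, 0 ≤ ∫ x in ρ..a, G x := fun a ha =>
    (mul_nonneg (sub_nonneg.2 ha.1) (hG_pos ρ hρmem).le).trans
      (hG_mono.mul_le_integral hρmem ha ha.1)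
  have hI_pos : ∀ a ∈ Set.Icc ρ 1, ρ < a → 0 < ∫ x in ρ..a, G x := fun a ha h =>
    (mul_pos (sub_pos.2 h) (hG_pos ρ hρmem)).trans_le
      (hG_mono.mul_le_integral hρmem ha ha.1)
  have hbounds : ∀ θ ∈ Set.Icc ρ 1, ρ ≤ β θ ∧ β θ ≤ θ := by
    intro θ hθ
    have h1 := div_nonneg (hI_nonneg θ hθ) (hG_pos θ hθ).le
    have h2 := (div_le_iff₀ (hG_pos θ hθ)).2 (hG_mono.integral_le_mul hρmem hθ hθ.1)
    rw [hβ θ hθ]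
    constructor <;> linarith
  have hkey : ∀ a ∈ Set.Icc ρ 1, ∀ b ∈ Set.Icc ρ 1, a ≤ b →
      (∫ x in ρ..a, G x) / G a - (∫ x in ρ..a, G x) / G b ≤ β b - β a := by
    intro a ha b hb hab
    have hadd := intervalIntegral.integral_add_adjacent_intervals
      (hG_mono.intervalIntegrable_of_mem_Icc hρmem ha)
      (hG_mono.intervalIntegrable_of_mem_Icc ha hb)
    have h2 := (div_le_iff₀ (hG_pos b hb)).2 (hG_mono.integral_le_mul ha hb hab)
    rw [hβ a ha, hβ b hb, ← hadd, add_div]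
    linarith
  have hmono : MonotoneOn β (Set.Icc ρ 1) := by
    intro a ha b hb hab
    have h1 := hkey a ha b hb hab
    have h2 := div_le_div_of_nonneg_left (hI_nonneg a ha) (hG_pos a ha) (hG_mono ha hb hab)
    linarith
  refine ⟨hbounds, hmono, fun hS => ?_⟩
  have hstrict : ∀ a ∈ Set.Icc ρ 1, ∀ b ∈ Set.Icc ρ 1, ρ < a → a < b → β a < β b := by
    intro a ha b hb hρa hab
    have h1 := hkey a ha b hb hab.le
    have h2 := div_lt_div_of_pos_left (hI_pos a ha hρa) (hG_pos a ha) (hS ha hb hab)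
    linarith
  intro a ha b hb hab
  have ham : a < (a + b) / 2 := by linarith
  have hmb : (a + b) / 2 < b := by linarith
  have hm : (a + b) / 2 ∈ Set.Icc ρ 1 := ⟨ha.1.trans ham.le, hmb.le.trans hb.2⟩
  -- The midpoint lies strictly above `ρ` even when `a = ρ`.
  exact (hmono ha hm ham.le).trans_lt (hstrict _ hm b hb (ha.1.trans_lt ham) hmb)
end

section
/- Let q, t : [0,1] → ℝ with 0 ≤ q(θ) ≤ 1 for all θ. Suppose: (incentive compatibility) for all θ, θ' ∈ [0,1], θ·q(θ) − t(θ) ≥ θ·q(θ') − t(θ'); (ex-post individual rationality) t(θ) ≤ θ·q(θ) for all θ ∈ [0,1]; and (single-buyer ex-post auctioneer identity compatibility) t(θ)·q(θ) ≥ t(θ) whenever q(θ) > 0. Then there exists c ≥ 0 such that for all θ ∈ [0,1]: t(θ) ≤ (c if θ ≥ c, else 0); moreover, whenever t(θ) > 0 one has q(θ) = 1 and t(θ) = c. That is, the payments are dominated by those of a posted-price mechanism with price c. -/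
/-! A positive payment forces certain allocation: individual rationality gives `q θ > 0`, and then
auctioneer identity compatibility `t θ * q θ ≥ t θ` gives `q θ = 1`. Two types who both receive the
good for sure must pay the same by incentive compatibility, so there is a single positive payment
`c`, and individual rationality says that only types `θ ≥ c` can pay it. -/

/-- Single-buyer step of the posted-price theorem: under incentive
compatibility, ex-post individual rationality, and single-buyer ex-post
auctioneer identity compatibility, the payments are dominated by those of a
posted-price mechanism with some price `c ≥ 0`. -/
theorem stmt_5 (q t : ℝ → ℝ)
    (hq : ∀ θ ∈ Set.Icc (0:ℝ) 1, 0 ≤ q θ ∧ q θ ≤ 1)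
    (hIC : ∀ θ ∈ Set.Icc (0:ℝ) 1, ∀ θ' ∈ Set.Icc (0:ℝ) 1,
      θ * q θ - t θ ≥ θ * q θ' - t θ')
    (hIR : ∀ θ ∈ Set.Icc (0:ℝ) 1, t θ ≤ θ * q θ)
    (hAIC : ∀ θ ∈ Set.Icc (0:ℝ) 1, 0 < q θ → t θ * q θ ≥ t θ) :
    ∃ c : ℝ, 0 ≤ c ∧
      (∀ θ ∈ Set.Icc (0:ℝ) 1, t θ ≤ if c ≤ θ then c else 0) ∧
      (∀ θ ∈ Set.Icc (0:ℝ) 1, 0 < t θ → q θ = 1 ∧ t θ = c) := by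
  have hone : ∀ θ ∈ Set.Icc (0:ℝ) 1, 0 < t θ → q θ = 1 := by
    intro θ hθ ht
    have hpos : 0 < q θ := pos_of_mul_pos_right (ht.trans_le (hIR θ hθ)) hθ.1
    have hge : 1 ≤ q θ := le_of_mul_le_mul_left (by linarith [hAIC θ hθ hpos]) ht
    exact le_antisymm (hq θ hθ).2 hge
  by_cases hex : ∃ θ₀ ∈ Set.Icc (0:ℝ) 1, 0 < t θ₀
  · obtain ⟨θ₀, h₀, ht₀⟩ := hex
    have heq : ∀ θ ∈ Set.Icc (0:ℝ) 1, 0 < t θ → t θ = t θ₀ := by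
      intro θ hθ ht
      have h1 := hIC θ hθ θ₀ h₀
      have h2 := hIC θ₀ h₀ θ hθ
      rw [hone θ hθ ht, hone θ₀ h₀ ht₀] at h1 h2
      linarith
    refine ⟨t θ₀, ht₀.le, fun θ hθ => ?_, fun θ hθ ht => ⟨hone θ hθ ht, heq θ hθ ht⟩⟩
    rcases le_or_gt (t θ) 0 with ht | ht
    · split_ifs <;> linarith
    · have hle := hIR θ hθ
      rw [hone θ hθ ht, heq θ hθ ht, mul_one] at hle
      rw [if_pos hle, heq θ hθ ht]
  -- No type makes a positive payment, so the price 0 already dominates.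
  · push Not at hex
    refine ⟨0, le_rfl, fun θ hθ => ?_, fun θ hθ ht => absurd ht (hex θ hθ).not_gt⟩
    simpa using hex θ hθ
end

section
/- For every natural number n ≥ 1 and all real numbers b, a, c with 0 ≤ b < a ≤ c: (a^{n+1} − b^{n+1}) / ((n+1)·c^n) < (a^n − b^n) / (n·c^{n−1}). -/
/-! After clearing denominators the claim is `n (a^{n+1} - b^{n+1}) < (n+1) c (a^n - b^n)`. As
`a^n - b^n > 0`, the right side is smallest at `c = a`, where the inequality says that the strictly
convex function `x ↦ x^{n+1}` lies above its tangent line at `b` (`tangent_lt_pow`). -/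

/-- The graph of `x ↦ x^{n+1}` at `a` lies strictly above the tangent line at `b`. -/
theorem tangent_lt_pow (n : ℕ) (hn : 1 ≤ n) (b a : ℝ) (hb : 0 ≤ b) (hba : b < a) :
    ((n : ℝ) + 1) * a * b ^ n - n * b ^ (n + 1) < a ^ (n + 1) := by
  induction n, hn using Nat.le_induction with
  | base => push_cast; nlinarith [sq_pos_of_pos (sub_pos.2 hba)]
  | succ n hn ih =>
    have h1 := mul_lt_mul_of_pos_right ih (hb.trans_lt hba)
    -- The tangent bound times `a` exceeds the next one by `(n+1) b^n (a-b)^2`.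
    have h2 : 0 ≤ ((n : ℝ) + 1) * b ^ n * (a - b) ^ 2 := by positivity
    push_cast
    ring_nf at h1 h2 ⊢
    linarith

/-- Polynomial inequality from the finite-type-space analysis: for `n ≥ 1` and
`0 ≤ b < a ≤ c`,
`(a^{n+1} − b^{n+1})/((n+1)·c^n) < (a^n − b^n)/(n·c^{n−1})`. -/
theorem stmt_9 (n : ℕ) (hn : 1 ≤ n) (b a c : ℝ)
    (hb : 0 ≤ b) (hba : b < a) (hac : a ≤ c) :
    (a ^ (n + 1) - b ^ (n + 1)) / (((n : ℝ) + 1) * c ^ n) <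
      (a ^ n - b ^ n) / ((n : ℝ) * c ^ (n - 1)) := by
  have hc : 0 < c := (hb.trans_lt hba).trans_le hac
  have hn0 : (0 : ℝ) < n := by exact_mod_cast hn
  have hpow : b ^ n < a ^ n := pow_lt_pow_left₀ hba hb (by omega)
  have key : (n : ℝ) * (a ^ (n + 1) - b ^ (n + 1)) < (n + 1) * c * (a ^ n - b ^ n) := by
    have h1 := tangent_lt_pow n hn b a hb hba
    have h2 : 0 ≤ ((n : ℝ) + 1) * ((c - a) * (a ^ n - b ^ n)) :=
      mul_nonneg (by positivity) (mul_nonneg (sub_nonneg.2 hac) (sub_pos.2 hpow).le)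
    ring_nf at h1 h2 ⊢
    linarith
  have hcn : c ^ n = c ^ (n - 1) * c := (pow_sub_one_mul (by omega) c).symm
  rw [div_lt_div_iff₀ (by positivity) (by positivity), hcn]
  have h3 := mul_lt_mul_of_pos_right key (pow_pos hc (n - 1))
  linarith
end

section
/- Finite type space: let K ≥ 2, let θ¹ < θ² < ⋯ < θ^K be real numbers, let f_m > 0 for m = 1, …, K, and set F_m = Σ_{l=1}^m f_l with F_0 = 0. Fix indices 1 ≤ k* < k ≤ K and for each natural number n ≥ 1 define the tie-corrected first-price payment g^n(θ^k) = θ^k − Σ_{m=k*+1}^{k} (θ^m − θ^{m−1}) · (F_{m−1}^n − F_{m−2}^n) / (n · f_{m−1} · F_{k−1}^{n−1}). Then for every n ≥ 1, g^n(θ^k) < g^{n+1}(θ^k). -/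
/-!
The claim holds term by term: with `b = F_{m-2} < a = F_{m-1} ≤ c = F_{k-1}`, the quantity
`(a^n - b^n) / (n c^{n-1})` strictly decreases in `n`. Since `c ≥ a`, this follows from
`n (a^{n+1} - b^{n+1}) < (n+1) a (a^n - b^n)`, that is, from
`0 < a^{n+1} - (n+1) a b^n + n b^{n+1}`, a homogeneous strict Bernoulli inequality
(`bernoulli_pos`). The remaining factor `(θ^m - θ^{m-1}) / f_{m-1}` is positive, and the sum is
nonempty because `k* < k`.
-/

/-- At `x = a`, the function `x ↦ x ^ (n + 1)` lies strictly above its tangent line at `b`.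
Writing `P n` for the gap, one has `P (n + 1) = a * P n + (n + 1) * b ^ n * (a - b) ^ 2`. -/
lemma bernoulli_pos (a b : ℝ) (hb : 0 ≤ b) (hab : b < a) (n : ℕ) (hn : 1 ≤ n) :
    0 < a ^ (n + 1) - (n + 1) * a * b ^ n + n * b ^ (n + 1) := by
  induction n, hn using Nat.le_induction with
  | base =>
    have : 0 < (a - b) ^ 2 := pow_pos (sub_pos.2 hab) 2
    norm_num
    nlinarith
  | succ n hn ih =>
    have h1 := mul_pos (hb.trans_lt hab) ih
    have h2 : 0 ≤ ((n : ℝ) + 1) * b ^ n * (a - b) ^ 2 := by positivity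
    push_cast
    refine (add_pos_of_pos_of_nonneg h1 h2).trans_eq ?_
    ring

lemma term_lt (a b c : ℝ) (hb : 0 ≤ b) (hab : b < a) (hac : a ≤ c) (n : ℕ) (hn : 1 ≤ n) :
    (a ^ (n + 1) - b ^ (n + 1)) / (((n + 1 : ℕ) : ℝ) * c ^ n) <
      (a ^ n - b ^ n) / ((n : ℝ) * c ^ (n - 1)) := by
  obtain ⟨j, rfl⟩ : ∃ j, n = j + 1 := ⟨n - 1, by omega⟩
  have hc : 0 < c := (hb.trans_lt hab).trans_le hac
  have hB := bernoulli_pos a b hb hab (j + 1) hn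
  have hpow : 0 ≤ a ^ (j + 1) - b ^ (j + 1) :=
    sub_nonneg.2 (pow_le_pow_left₀ hb hab.le _)
  have hcc : 0 ≤ ((j : ℝ) + 2) * (c - a) * (a ^ (j + 1) - b ^ (j + 1)) :=
    mul_nonneg (mul_nonneg (by positivity) (sub_nonneg.2 hac)) hpow
  have key : 0 < ((j : ℝ) + 2) * c * (a ^ (j + 1) - b ^ (j + 1))
      - (j + 1) * (a ^ (j + 2) - b ^ (j + 2)) := by
    push_cast at hB
    refine (add_pos_of_pos_of_nonneg hB hcc).trans_eq ?_
    ring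
  rw [div_lt_div_iff₀ (by positivity) (by simp; positivity), ← sub_pos]
  refine (mul_pos (pow_pos hc j) key).trans_eq ?_
  simp only [Nat.add_sub_cancel]
  push_cast
  ring

/-- Finite type space: the tie-corrected first-price payment `g^n(θ^k)` of a
unique winner of type `θ^k` strictly above the reserve `θ^{k*}` strictly
increases with the number of bidders `n`. -/
theorem stmt_10 (K : ℕ) (hK : 2 ≤ K) (θ f : ℕ → ℝ)
    (hθ : ∀ m, 1 ≤ m → m < K → θ m < θ (m + 1))
    (hf : ∀ m, 1 ≤ m → m ≤ K → 0 < f m)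
    (F : ℕ → ℝ) (hF : ∀ m, F m = ∑ l ∈ Finset.Icc 1 m, f l)
    (kstar k : ℕ) (hkstar : 1 ≤ kstar) (hkk : kstar < k) (hkK : k ≤ K)
    (g : ℕ → ℝ)
    (hg : ∀ n, 1 ≤ n → g n = θ k - ∑ m ∈ Finset.Icc (kstar + 1) k,
      (θ m - θ (m - 1)) * (F (m - 1) ^ n - F (m - 2) ^ n) /
        ((n : ℝ) * f (m - 1) * F (k - 1) ^ (n - 1))) :
    ∀ n, 1 ≤ n → g n < g (n + 1) := by
  intro n hn
  have hF0 : F 0 = 0 := by simp [hF]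
  have hFs : ∀ m, F (m + 1) = F m + f (m + 1) := fun m => by
    rw [hF, hF, Finset.sum_Icc_succ_top (by omega)]
  have hFle : ∀ i j, i ≤ j → j ≤ K → F i ≤ F j := fun i j hij hj => by
    induction j, hij using Nat.le_induction with
    | base => exact le_rfl
    | succ j hij ih =>
      rw [hFs]
      linarith [ih (by omega), hf (j + 1) (by omega) hj]
  rw [hg n hn, hg (n + 1) (by omega)]
  refine sub_lt_sub_left (Finset.sum_lt_sum_of_nonempty
    (Finset.nonempty_Icc.2 (by omega)) fun m hm => ?_) _
  rw [Finset.mem_Icc] at hm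
  obtain ⟨j, rfl⟩ : ∃ j, m = j + 2 := ⟨m - 2, by omega⟩
  have e1 : j + 2 - 1 = j + 1 := by omega
  have e2 : j + 2 - 2 = j := by omega
  rw [e1, e2, Nat.add_sub_cancel]
  have hfj : 0 < f (j + 1) := hf _ (by omega) (by omega)
  have hb : 0 ≤ F j := hF0 ▸ hFle 0 j (by omega) (by omega)
  have hab : F j < F (j + 1) := by rw [hFs]; linarith
  have hac : F (j + 1) ≤ F (k - 1) := hFle _ _ (by omega) (by omega)
  have hθj : 0 < (θ (j + 2) - θ (j + 1)) / f (j + 1) :=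
    div_pos (sub_pos.2 (hθ (j + 1) (by omega) (by omega))) hfj
  have h := mul_lt_mul_of_pos_left (term_lt _ _ _ hb hab hac n hn) hθj
  rw [div_mul_div_comm, div_mul_div_comm] at h
  convert h using 2 <;> ring
end

section
/- Finite type space: let K ≥ 2, let θ¹ < θ² < ⋯ < θ^K be real numbers, let f_m > 0 for m = 1, …, K, and set F_m = Σ_{l=1}^m f_l with F_0 = 0. Fix indices 1 ≤ k* < k ≤ K and for each natural number n ≥ 1 define g^n(θ^k) = θ^k − Σ_{m=k*+1}^{k} (θ^m − θ^{m−1}) · (F_{m−1}^n − F_{m−2}^n) / (n · f_{m−1} · F_{k−1}^{n−1}). Then g^n(θ^k) < θ^k for every n ≥ 1, and g^n(θ^k) → θ^k as n → ∞. -/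
/-!
Every summand of `θ k - g n` is strictly positive, because `θ` and `F` are strictly increasing,
and the sum is nonempty since `kstar < k`; this gives strictness for every `n ≥ 1`. Moreover
`F (m - 1) ^ n - F (m - 2) ^ n ≤ F (k - 1) ^ n` by monotonicity of `F`, so dividing by
`n * f (m - 1) * F (k - 1) ^ (n - 1)` leaves at most `F (k - 1) / (n * f (m - 1))`: each of the
finitely many summands is `O(1 / n)`, whence the limit.
-/

/-- Finite type space: the tie-corrected first-price payment `g^n(θ^k)` is
always strictly below the winner's type `θ^k`, and converges to `θ^k` as the
number of bidders `n` grows without bound. -/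
theorem stmt_11 (K : ℕ) (hK : 2 ≤ K) (θ f : ℕ → ℝ)
    (hθ : ∀ m, 1 ≤ m → m < K → θ m < θ (m + 1))
    (hf : ∀ m, 1 ≤ m → m ≤ K → 0 < f m)
    (F : ℕ → ℝ) (hF : ∀ m, F m = ∑ l ∈ Finset.Icc 1 m, f l)
    (kstar k : ℕ) (hkstar : 1 ≤ kstar) (hkk : kstar < k) (hkK : k ≤ K)
    (g : ℕ → ℝ)
    (hg : ∀ n, 1 ≤ n → g n = θ k - ∑ m ∈ Finset.Icc (kstar + 1) k,
      (θ m - θ (m - 1)) * (F (m - 1) ^ n - F (m - 2) ^ n) /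
        ((n : ℝ) * f (m - 1) * F (k - 1) ^ (n - 1))) :
    (∀ n, 1 ≤ n → g n < θ k) ∧
    Filter.Tendsto g Filter.atTop (nhds (θ k)) := by
  have hstep : ∀ j, F (j + 1) = F j + f (j + 1) := fun j => by
    rw [hF, hF, Finset.sum_Icc_succ_top (by omega)]
  have hmono : ∀ i j, i ≤ j → j ≤ K → F i ≤ F j := fun i j hij hj => by
    rw [hF, hF]
    refine Finset.sum_le_sum_of_subset_of_nonneg (Finset.Icc_subset_Icc_right hij) ?_
    intro l hl _
    rw [Finset.mem_Icc] at hl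
    exact (hf l hl.1 (hl.2.trans hj)).le
  have hF0 : F 0 = 0 := by simp [hF]
  have hnn : ∀ j, j ≤ K → 0 ≤ F j := fun j hj => hF0 ▸ hmono 0 j (Nat.zero_le _) hj
  have hFk : 0 < F (k - 1) := by
    obtain ⟨j, rfl⟩ : ∃ j, k = j + 2 := ⟨k - 2, by omega⟩
    have h1 := hnn j (by omega)
    have h2 := hf (j + 1) (by omega) (by omega)
    have h3 := hstep j
    change 0 < F (j + 1)
    linarith
  have hterm : ∀ m ∈ Finset.Icc (kstar + 1) k, ∀ n : ℕ, 1 ≤ n →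
      0 < (θ m - θ (m - 1)) * (F (m - 1) ^ n - F (m - 2) ^ n) /
        ((n : ℝ) * f (m - 1) * F (k - 1) ^ (n - 1)) ∧
      (θ m - θ (m - 1)) * (F (m - 1) ^ n - F (m - 2) ^ n) /
        ((n : ℝ) * f (m - 1) * F (k - 1) ^ (n - 1)) ≤
        ((θ m - θ (m - 1)) * F (k - 1) / f (m - 1)) / (n : ℝ) := by
    intro m hm n hn
    rw [Finset.mem_Icc] at hm
    obtain ⟨j, rfl⟩ : ∃ j, m = j + 2 := ⟨m - 2, by omega⟩
    simp only [show j + 2 - 1 = j + 1 by omega, show j + 2 - 2 = j by omega]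
    have hfp : 0 < f (j + 1) := hf (j + 1) (by omega) (by omega)
    have hd : 0 < θ (j + 2) - θ (j + 1) := sub_pos.2 (hθ (j + 1) (by omega) (by omega))
    have hj : 0 ≤ F j := hnn j (by omega)
    have hlt : F j < F (j + 1) := by
      rw [hstep]
      linarith
    have hpow : F j ^ n < F (j + 1) ^ n := pow_lt_pow_left₀ hlt hj (by omega)
    have hn' : (0 : ℝ) < n := by exact_mod_cast hn
    have hP : 0 < F (k - 1) ^ (n - 1) := pow_pos hFk _
    refine ⟨div_pos (mul_pos hd (sub_pos.2 hpow)) (by positivity), ?_⟩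
    have hle : F (j + 1) ^ n - F j ^ n ≤ F (k - 1) * F (k - 1) ^ (n - 1) := by
      rw [mul_pow_sub_one (by omega : n ≠ 0)]
      have h1 : F (j + 1) ^ n ≤ F (k - 1) ^ n :=
        pow_le_pow_left₀ (hj.trans hlt.le) (hmono _ _ (by omega) (by omega)) n
      have h2 : 0 ≤ F j ^ n := pow_nonneg hj n
      linarith
    calc _ ≤ (θ (j + 2) - θ (j + 1)) * (F (k - 1) * F (k - 1) ^ (n - 1)) /
          ((n : ℝ) * f (j + 1) * F (k - 1) ^ (n - 1)) := by gcongr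
      _ = _ := by field_simp
  refine ⟨fun n hn => ?_, ?_⟩
  · rw [hg n hn]
    exact sub_lt_self _ (Finset.sum_pos (fun m hm => (hterm m hm n hn).1)
      (Finset.nonempty_Icc.2 hkk))
  · have hsum : Filter.Tendsto (fun n : ℕ => ∑ m ∈ Finset.Icc (kstar + 1) k,
        (θ m - θ (m - 1)) * (F (m - 1) ^ n - F (m - 2) ^ n) /
          ((n : ℝ) * f (m - 1) * F (k - 1) ^ (n - 1))) Filter.atTop (nhds 0) := by
      rw [← Finset.sum_const_zero (s := Finset.Icc (kstar + 1) k)]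
      refine tendsto_finsetSum _ fun m hm => ?_
      refine tendsto_of_tendsto_of_tendsto_of_le_of_le' tendsto_const_nhds
        (tendsto_const_div_atTop_nhds_zero_nat
          ((θ m - θ (m - 1)) * F (k - 1) / f (m - 1))) ?_ ?_
      · filter_upwards [Filter.eventually_ge_atTop 1] with n hn using (hterm m hm n hn).1.le
      · filter_upwards [Filter.eventually_ge_atTop 1] with n hn using (hterm m hm n hn).2
    have hlim := (tendsto_const_nhds (x := θ k)).sub hsum
    rw [sub_zero] at hlim
    refine hlim.congr' ?_
    filter_upwards [Filter.eventually_ge_atTop 1] with n hn using (hg n hn).symm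
end
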